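/- arXiv:1310.6850 — 6 statements merged into one kernel-verified Lean document; each statement's English description precedes it below -/
import Mathlib

section
/- Let L be an invertible real m×m matrix and let N : ℝ^m → ℝ^m be differentiable at a point x* and positively homogeneous of degree p. If x* satisfies L x* = N(x*), then the iteration matrix S = L⁻¹ N'(x*) of the classical fixed-point algorithm satisfies S x* = p·x*; that is, x* is an eigenvector of S with eigenvalue equal to the degree of homogeneity p. -/
open Matrix

/-- The continuous linear map on `ℝ^m` induced by a matrix. -/
noncomputable def matCLM {m : ℕ} (A : Matrix (Fin m) (Fin m) ℝ) :
    (Fin m → ℝ) →L[ℝ] (Fin m → ℝ) :=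
  LinearMap.toContinuousLinearMap A.mulVecLin

/-!
A map `N` homogeneous of degree `p` restricts to `t ↦ t ^ p • N x` on the ray through `x`.
Differentiating at `t = 1` gives Euler's identity `N' x = p • N x`, and applying the linear map
`L⁻¹` turns the right-hand side into `p • x` when `x` is fixed by `L⁻¹ ∘ N`.
-/

open Filter Topology

/-- Positive homogeneity of degree `p`, localized at a point `x`: the scaling law is only required
for the multiples of `x` by scalars close to `1`, which is all that Euler's identity at `x` sees.
It thus also applies to maps homogeneous on a cone only. -/
def PosHomogeneousAt {E F : Type*} [SMul ℝ E] [SMul ℝ F] (f : E → F) (p : ℝ) (x : E) : Prop :=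
  ∀ᶠ t in 𝓝 (1 : ℝ), f (t • x) = t ^ p • f x

namespace PosHomogeneousAt

variable {E F : Type*} {f : E → F} {p : ℝ} {x : E}

theorem of_forall_pos [SMul ℝ E] [SMul ℝ F] (h : ∀ t : ℝ, 0 < t → f (t • x) = t ^ p • f x) :
    PosHomogeneousAt f p x :=
  (eventually_gt_nhds one_pos).mono h

variable [NormedAddCommGroup F] [NormedSpace ℝ F]

theorem hasLineDerivAt_self [AddCommGroup E] [Module ℝ E] (hf : PosHomogeneousAt f p x) :
    HasLineDerivAt ℝ f (p • f x) x x := by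
  have hpow : HasDerivAt (fun t : ℝ ↦ (1 + t) ^ p • f x) (p • f x) 0 := by
    simpa using (((hasDerivAt_id (0 : ℝ)).const_add 1).rpow_const (p := p) (by simp)).smul_const
      (f x)
  have hnear : Tendsto (fun t : ℝ ↦ 1 + t) (𝓝 0) (𝓝 1) :=
    (continuous_const_add 1).tendsto' 0 1 (add_zero 1)
  refine hpow.congr_of_eventuallyEq ((hnear.eventually hf).mono fun t ht ↦ ?_)
  simpa only [add_smul, one_smul] using ht

theorem apply_self_of_hasFDerivAt [NormedAddCommGroup E] [NormedSpace ℝ E] {f' : E →L[ℝ] F}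
    (hf : PosHomogeneousAt f p x) (hf' : HasFDerivAt f f' x) : f' x = p • f x :=
  (hf'.hasLineDerivAt x).unique hf.hasLineDerivAt_self

end PosHomogeneousAt

theorem eigenvector_of_homogeneous_fixed_point_general {E F : Type*}
    [NormedAddCommGroup E] [NormedSpace ℝ E] [NormedAddCommGroup F] [NormedSpace ℝ F]
    (M : F →ₗ[ℝ] E) {N : E → F} {N' : E →L[ℝ] F} {p : ℝ} {x : E}
    (hhom : PosHomogeneousAt N p x) (hdiff : HasFDerivAt N N' x)
    (hfix : Function.IsFixedPt (M ∘ N) x) : M (N' x) = p • x := by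
  have hMN : M (N x) = x := hfix
  rw [hhom.apply_self_of_hasFDerivAt hdiff, map_smul, hMN]

theorem inv_mulVec_eq_of_mulVec_eq {n R : Type*} [Fintype n] [DecidableEq n] [CommRing R]
    {A : Matrix n n R} (hA : IsUnit A.det) {u v : n → R} (h : A *ᵥ v = u) : A⁻¹ *ᵥ u = v :=
  letI := A.invertibleOfIsUnitDet hA
  inv_mulVec_eq_vec h.symm

theorem eigenvector_of_homogeneous_fixed_point
    {m : ℕ} (L A : Matrix (Fin m) (Fin m) ℝ) (hL : IsUnit L.det)
    (N : (Fin m → ℝ) → (Fin m → ℝ)) (p : ℝ) (xs : Fin m → ℝ)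
    (hhom : ∀ t : ℝ, 0 < t → ∀ x : Fin m → ℝ, N (t • x) = (t ^ p) • N x)
    (hdiff : HasFDerivAt N (matCLM A) xs)
    (hfix : L.mulVec xs = N xs) :
    (L⁻¹ * A).mulVec xs = p • xs := by
  rw [← mulVec_mulVec]
  exact eigenvector_of_homogeneous_fixed_point_general L⁻¹.mulVecLin
    (.of_forall_pos fun t ht ↦ hhom t ht xs) hdiff (inv_mulVec_eq_of_mulVec_eq hL hfix)
end

section
/- Let L be an invertible real m×m matrix, let N₁, N₂ : ℝ^m → ℝ^m be differentiable at x* and positively homogeneous of degrees p₁ and p₂ respectively, with p₁ ≠ p₂, and suppose L x* = N₁(x*) + N₂(x*). Set S = L⁻¹(N₁'(x*) + N₂'(x*)). Then L⁻¹N₁(x*) = (1/(p₂ − p₁))·(p₂·x* − S x*) and L⁻¹N₂(x*) = (1/(p₂ − p₁))·(S x* − p₁·x*). -/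
open Matrix

/-! Put `u = L⁻¹ (N₁ x)` and `v = L⁻¹ (N₂ x)`. Euler's identity `N'(x) x = p • N x` turns `S x` into
`p₁ • u + p₂ • v`, while the fixed-point equation says `x = u + v`. For `p₁ ≠ p₂` these two linear
equations determine `u` and `v`. -/

open Topology

section WeightedSum

variable {k V : Type*} [DivisionRing k] [AddCommGroup V] [Module k V] {a b : k} {u v x s : V}

theorem left_eq_of_add_eq_of_smul_add_smul_eq (hab : a ≠ b) (hx : u + v = x)
    (hs : a • u + b • v = s) : u = (1 / (b - a)) • (b • x - s) := by
  have hu : b • x - s = (b - a) • u := by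
    rw [← hx, ← hs, smul_add, sub_smul, add_sub_add_right_eq_sub]
  rw [hu, one_div, inv_smul_smul₀ (sub_ne_zero.mpr hab.symm)]

theorem right_eq_of_add_eq_of_smul_add_smul_eq (hab : a ≠ b) (hx : u + v = x)
    (hs : a • u + b • v = s) : v = (1 / (b - a)) • (s - a • x) := by
  have hv : s - a • x = (b - a) • v := by
    rw [← hx, ← hs, smul_add, sub_smul, add_sub_add_left_eq_sub]
  rw [hv, one_div, inv_smul_smul₀ (sub_ne_zero.mpr hab.symm)]

end WeightedSum

/-- Positive homogeneity of degree `p` along the ray through `x`, localised to scaling factors near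
`1` because Euler's identity at `x` only concerns the derivative of `t ↦ G (t • x)` at `t = 1`. -/
def IsHomogeneousNear {E F : Type*} [SMul ℝ E] [SMul ℝ F] (p : ℝ) (G : E → F) (x : E) : Prop :=
  ∀ᶠ t : ℝ in 𝓝 1, G (t • x) = t ^ p • G x

namespace IsHomogeneousNear

theorem of_forall_pos {E F : Type*} [SMul ℝ E] [SMul ℝ F] {p : ℝ} {G : E → F} {x : E}
    (hG : ∀ t : ℝ, 0 < t → G (t • x) = t ^ p • G x) : IsHomogeneousNear p G x :=
  (lt_mem_nhds one_pos).mono hG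

theorem hasLineDerivAt {E F : Type*} [AddCommGroup E] [Module ℝ E] [NormedAddCommGroup F]
    [NormedSpace ℝ F] {p : ℝ} {G : E → F} {x : E} (hG : IsHomogeneousNear p G x) :
    HasLineDerivAt ℝ G (p • G x) x x := by
  have hpow : HasDerivAt (fun t : ℝ ↦ (1 + t) ^ p • G x) (p • G x) 0 := by
    have hshift : HasDerivAt (fun t : ℝ ↦ 1 + t) 1 0 := (hasDerivAt_id 0).const_add 1
    simpa using (hshift.rpow_const (p := p) (by simp)).smul_const (G x)
  have htend : Filter.Tendsto (fun t : ℝ ↦ 1 + t) (𝓝 0) (𝓝 1) := by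
    simpa using (continuous_const_add (1 : ℝ)).tendsto 0
  refine hpow.congr_of_eventuallyEq ?_
  filter_upwards [htend.eventually hG] with t ht
  rw [← ht, add_smul, one_smul]

variable {E F : Type*} [NormedAddCommGroup E] [NormedSpace ℝ E] [NormedAddCommGroup F]
  [NormedSpace ℝ F] {p : ℝ} {G : E → F} {x : E}

theorem apply_self_eq_smul {G' : E →L[ℝ] F} (hG : IsHomogeneousNear p G x)
    (hG' : HasFDerivAt G G' x) : G' x = p • G x :=
  (hG'.hasLineDerivAt x).unique hG.hasLineDerivAt

end IsHomogeneousNear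

theorem leftInverse_nonsing_inv_mulVecLin {n R : Type*} [Fintype n] [DecidableEq n] [CommRing R]
    {A : Matrix n n R} (hA : IsUnit A.det) :
    Function.LeftInverse A⁻¹.mulVecLin A.mulVecLin := fun y ↦ by
  rw [mulVecLin_apply, mulVecLin_apply, mulVec_mulVec, nonsing_inv_mul A hA, one_mulVec]

theorem two_homogeneities_decomposition_general {E F : Type*} [NormedAddCommGroup E]
    [NormedSpace ℝ E] [NormedAddCommGroup F] [NormedSpace ℝ F] {L : E →ₗ[ℝ] F} {K : F →ₗ[ℝ] E}
    (hKL : Function.LeftInverse K L) {N₁ N₂ : E → F} {N₁' N₂' : E →L[ℝ] F} {p₁ p₂ : ℝ}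
    (hp : p₁ ≠ p₂) {x : E} (hhom₁ : IsHomogeneousNear p₁ N₁ x) (hhom₂ : IsHomogeneousNear p₂ N₂ x)
    (hd₁ : HasFDerivAt N₁ N₁' x) (hd₂ : HasFDerivAt N₂ N₂' x) (hfix : L x = N₁ x + N₂ x) :
    K (N₁ x) = (1 / (p₂ - p₁)) • (p₂ • x - K ((N₁' + N₂') x)) ∧
      K (N₂ x) = (1 / (p₂ - p₁)) • (K ((N₁' + N₂') x) - p₁ • x) := by
  have hsum : K (N₁ x) + K (N₂ x) = x := by
    rw [← map_add, ← hfix, hKL x]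
  have hweighted : p₁ • K (N₁ x) + p₂ • K (N₂ x) = K ((N₁' + N₂') x) := by
    rw [_root_.add_apply, hhom₁.apply_self_eq_smul hd₁, hhom₂.apply_self_eq_smul hd₂, map_add,
      map_smul, map_smul]
  exact ⟨left_eq_of_add_eq_of_smul_add_smul_eq hp hsum hweighted,
    right_eq_of_add_eq_of_smul_add_smul_eq hp hsum hweighted⟩

theorem two_homogeneities_decomposition
    {m : ℕ} (L A₁ A₂ : Matrix (Fin m) (Fin m) ℝ) (hL : IsUnit L.det)
    (N₁ N₂ : (Fin m → ℝ) → (Fin m → ℝ)) (p₁ p₂ : ℝ) (hp : p₁ ≠ p₂) (xs : Fin m → ℝ)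
    (hhom₁ : ∀ t : ℝ, 0 < t → ∀ x : Fin m → ℝ, N₁ (t • x) = (t ^ p₁) • N₁ x)
    (hhom₂ : ∀ t : ℝ, 0 < t → ∀ x : Fin m → ℝ, N₂ (t • x) = (t ^ p₂) • N₂ x)
    (hd₁ : HasFDerivAt N₁ (matCLM A₁) xs)
    (hd₂ : HasFDerivAt N₂ (matCLM A₂) xs)
    (hfix : L.mulVec xs = N₁ xs + N₂ xs) :
    L⁻¹.mulVec (N₁ xs)
        = (1 / (p₂ - p₁)) • (p₂ • xs - (L⁻¹ * (A₁ + A₂)).mulVec xs) ∧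
    L⁻¹.mulVec (N₂ xs)
        = (1 / (p₂ - p₁)) • ((L⁻¹ * (A₁ + A₂)).mulVec xs - p₁ • xs) := by
  simpa [matCLM, ← mulVec_mulVec, add_mulVec] using two_homogeneities_decomposition_general
    (leftInverse_nonsing_inv_mulVecLin hL) hp (.of_forall_pos (hhom₁ · · xs))
    (.of_forall_pos (hhom₂ · · xs)) hd₁ hd₂ hfix
end

section
/- Let L be an invertible real m×m matrix and let N : ℝ^m → ℝ^m be differentiable at x*, positively homogeneous of degree p, and satisfy L x* = N(x*) and ⟨N(x*), x*⟩ ≠ 0. Then the stabilizing factor m(x) = ⟨Lx, x⟩/⟨N(x), x⟩ is differentiable at x* and its gradient there satisfies ⟨∇m(x*), x*⟩ = 1 − p. -/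
open Matrix

/-!
If `L` and `N` are positively homogeneous of degrees `q` and `p`, then the stabilizing factor is
positively homogeneous of degree `(q + 1) - (p + 1) = q - p`. It takes the value `1` at a point
where `L` and `N` agree, so Euler's identity for homogeneous functions gives `q - p` for its
derivative in the radial direction there. A linear `L` has `q = 1`.
-/

/-- Positive homogeneity of real degree `p`: `f (t • x) = t ^ p • f x` for `t > 0`. Nothing is
required at `t = 0`, where `Real.rpow` has the convention `0 ^ 0 = 1`. -/
def PosHomogeneous {E F : Type*} [SMul ℝ E] [SMul ℝ F] (p : ℝ) (f : E → F) : Prop :=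
  ∀ t : ℝ, 0 < t → ∀ x : E, f (t • x) = (t ^ p) • f x

namespace PosHomogeneous

section Algebra

variable {E F G H : Type*} [SMul ℝ E]
  [AddCommMonoid F] [Module ℝ F] [AddCommMonoid G] [Module ℝ G] [AddCommMonoid H] [Module ℝ H]
  {p q : ℝ}

theorem of_linearMap (f : F →ₗ[ℝ] G) : PosHomogeneous 1 f := fun t _ x => by
  rw [map_smul, Real.rpow_one]

theorem bilin (B : F →ₗ[ℝ] G →ₗ[ℝ] H) {f : E → F} {g : E → G}
    (hf : PosHomogeneous p f) (hg : PosHomogeneous q g) :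
    PosHomogeneous (p + q) fun x => B (f x) (g x) := fun t ht x => by
  simp only [hf t ht x, hg t ht x, map_smul, LinearMap.smul_apply, smul_smul,
    Real.rpow_add ht, mul_comm]

theorem div {f g : E → ℝ} (hf : PosHomogeneous p f) (hg : PosHomogeneous q g) :
    PosHomogeneous (p - q) fun x => f x / g x := fun t ht x => by
  simp only [hf t ht x, hg t ht x, smul_eq_mul, Real.rpow_sub ht, mul_div_mul_comm]

end Algebra

theorem hasFDerivAt_apply_self {E F : Type*} [NormedAddCommGroup E] [NormedSpace ℝ E]
    [NormedAddCommGroup F] [NormedSpace ℝ F] {p : ℝ} {f : E → F} {f' : E →L[ℝ] F} {x : E}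
    (hf : PosHomogeneous p f) (hf' : HasFDerivAt f f' x) : f' x = p • f x := by
  have ray : HasDerivAt (fun t : ℝ => t • x) x 1 := by
    simpa using (hasDerivAt_id (1 : ℝ)).smul_const x
  have along_ray : HasDerivAt (fun t : ℝ => f (t • x)) (f' x) 1 :=
    hf'.comp_hasDerivAt_of_eq 1 ray (one_smul ℝ x).symm
  have power : HasDerivAt (fun t : ℝ => t ^ p • f x) (p • f x) 1 := by
    simpa using (Real.hasDerivAt_rpow_const (p := p) (Or.inl one_ne_zero)).smul_const (f x)
  refine along_ray.unique (power.congr_of_eventuallyEq ?_)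
  filter_upwards [lt_mem_nhds one_pos] with t ht using hf t ht x

end PosHomogeneous

section StabilizingFactor

variable {E F : Type*} [NormedAddCommGroup E] [NormedSpace ℝ E]
  [NormedAddCommGroup F] [NormedSpace ℝ F]

/-- The stabilizing factor `⟨L x, x⟩ / ⟨N x, x⟩` of two possibly nonlinear maps, with a continuous
bilinear pairing `B` in place of the inner product. It is `0` where `B (N x) x = 0`. -/
noncomputable def stabilizingFactor (B : F →L[ℝ] E →L[ℝ] ℝ) (L N : E → F) (x : E) : ℝ :=
  B (L x) x / B (N x) x

variable (B : F →L[ℝ] E →L[ℝ] ℝ) {L N : E → F} {p q : ℝ} {x : E}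

theorem PosHomogeneous.stabilizingFactor (hL : PosHomogeneous q L) (hN : PosHomogeneous p N) :
    PosHomogeneous (q - p) (stabilizingFactor B L N) := by
  have id_hom : PosHomogeneous 1 (id : E → E) := .of_linearMap LinearMap.id
  rw [← add_sub_add_right_eq_sub q p 1]
  exact (hL.bilin B.toLinearMap₁₂ id_hom).div (hN.bilin B.toLinearMap₁₂ id_hom)

theorem stabilizingFactor_eq_one (hfix : L x = N x) (hne : B (N x) x ≠ 0) :
    stabilizingFactor B L N x = 1 := by
  rw [stabilizingFactor, hfix, div_self hne]

theorem differentiableAt_stabilizingFactor (hL : DifferentiableAt ℝ L x)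
    (hN : DifferentiableAt ℝ N x) (hne : B (N x) x ≠ 0) :
    DifferentiableAt ℝ (stabilizingFactor B L N) x := by
  unfold stabilizingFactor
  fun_prop (disch := exact hne)

theorem stabilizing_factor_directional_derivative_general
    (hL : PosHomogeneous q L) (hN : PosHomogeneous p N)
    (hL_diff : DifferentiableAt ℝ L x) (hN_diff : DifferentiableAt ℝ N x)
    (hfix : L x = N x) (hne : B (N x) x ≠ 0) :
    DifferentiableAt ℝ (stabilizingFactor B L N) x ∧
    fderiv ℝ (stabilizingFactor B L N) x x = q - p := by
  have hdiff := differentiableAt_stabilizingFactor B hL_diff hN_diff hne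
  refine ⟨hdiff, ?_⟩
  rw [(hL.stabilizingFactor B hN).hasFDerivAt_apply_self hdiff.hasFDerivAt,
    stabilizingFactor_eq_one B hfix hne, smul_eq_mul, mul_one]

end StabilizingFactor

theorem stabilizing_factor_directional_derivative
    {m : ℕ} (L : Matrix (Fin m) (Fin m) ℝ) (hL : IsUnit L.det)
    (N : (Fin m → ℝ) → (Fin m → ℝ)) (p : ℝ) (xs : Fin m → ℝ)
    (hhom : ∀ t : ℝ, 0 < t → ∀ x : Fin m → ℝ, N (t • x) = (t ^ p) • N x)
    (hdiff : DifferentiableAt ℝ N xs)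
    (hfix : L.mulVec xs = N xs)
    (hne : N xs ⬝ᵥ xs ≠ 0) :
    DifferentiableAt ℝ (fun x => (L.mulVec x ⬝ᵥ x) / (N x ⬝ᵥ x)) xs ∧
    fderiv ℝ (fun x => (L.mulVec x ⬝ᵥ x) / (N x ⬝ᵥ x)) xs xs = 1 - p :=
  stabilizing_factor_directional_derivative_general (dotProductBilin ℝ ℝ).toContinuousBilinearMap
    (.of_linearMap L.mulVecLin) hhom L.mulVecLin.toContinuousLinearMap.differentiableAt hdiff
    hfix hne
end

section
/- Let A be an m×m matrix over a field K, let v, w ∈ K^m, let p ∈ K, and suppose A v = p·v. Then the characteristic polynomials satisfy the identity (X − p)·charpoly(A + v wᵀ) = (X − (p + wᵀv))·charpoly(A). In other words, a rank-one update along an eigenvector of A replaces the eigenvalue p by p + wᵀv and preserves the rest of the spectrum (with multiplicity). -/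
open Matrix Polynomial

/-!
If `M * V = V * T`, then right multiplication by the block matrix `[1, -V; 0, T]` clears the
upper right block of `[M, V; -W, 1]` and turns its lower right block into `T + W * V`.
The determinant of `[M, V; -W, 1]` is `det (M + V * W)`, by its Schur complement, so comparing
determinants gives `det (M + V * W) * det T = det M * det (T + W * V)` without inverting anything.
For characteristic matrices this is Rado's extension of Brauer's theorem; an eigenvector is the
case where `V` is a single column and `T` is the eigenvalue.
-/

section InvariantSubspace

variable {R n k : Type*} [CommRing R] [Fintype n] [DecidableEq n] [Fintype k] [DecidableEq k]

theorem det_add_mul_mul_det_of_mul_eq_mul {M : Matrix n n R} {V : Matrix n k R}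
    {T : Matrix k k R} (hMV : M * V = V * T) (W : Matrix k n R) :
    (M + V * W).det * T.det = M.det * (T + W * V).det := by
  have clear_block : fromBlocks M V (-W) 1 * fromBlocks 1 (-V) 0 T
      = fromBlocks M 0 (-W) (T + W * V) := by
    simp [fromBlocks_multiply, hMV, add_comm]
  simpa [det_fromBlocks_one₂₂] using congrArg det clear_block

theorem charmatrix_add (A B : Matrix n n R) :
    (A + B).charmatrix = A.charmatrix - B.map C := by
  simp [charmatrix, Matrix.map_add, sub_sub]

theorem charmatrix_mul_map_C_of_mul_eq_mul {A : Matrix n n R} {V : Matrix n k R}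
    {T : Matrix k k R} (hAV : A * V = V * T) :
    A.charmatrix * V.map C = V.map C * T.charmatrix := by
  have hC : A.map C * V.map C = V.map C * T.map C := by
    rw [← Matrix.map_mul, hAV, Matrix.map_mul]
  have hX : scalar n (X : R[X]) * V.map C = V.map C * scalar k (X : R[X]) := by
    ext1 i j
    simp only [scalar_apply, diagonal_mul, mul_diagonal, X_mul]
  simp only [charmatrix, RingHom.mapMatrix_apply, Matrix.sub_mul, Matrix.mul_sub, hX, hC]

theorem charpoly_add_mul_mul_charpoly_of_mul_eq_mul {A : Matrix n n R} {V : Matrix n k R}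
    {T : Matrix k k R} (hAV : A * V = V * T) (W : Matrix k n R) :
    (A + V * W).charpoly * T.charpoly = A.charpoly * (T + W * V).charpoly := by
  simpa only [charpoly, charmatrix_add, Matrix.map_mul, Matrix.mul_neg, Matrix.neg_mul,
    ← sub_eq_add_neg] using
    det_add_mul_mul_det_of_mul_eq_mul (charmatrix_mul_map_C_of_mul_eq_mul hAV) (-W.map C)

end InvariantSubspace

theorem charpoly_of_unique {R k : Type*} [CommRing R] [Unique k] [DecidableEq k] [Fintype k]
    (T : Matrix k k R) :
    T.charpoly = X - C (T default default) := by
  rw [charpoly, det_unique, charmatrix_apply_eq]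

theorem charpoly_rank_one_update_along_eigenvector_general
    {R n : Type*} [CommRing R] [Fintype n] [DecidableEq n]
    (A : Matrix n n R) (v w : n → R) (p : R) (h : A *ᵥ v = p • v) :
    (X - C p) * (A + vecMulVec v w).charpoly = (X - C (p + w ⬝ᵥ v)) * A.charpoly := by
  have hcol : A * replicateCol Unit v = replicateCol Unit v * scalar Unit p := by
    rw [← replicateCol_mulVec, h]
    ext i j
    simp [mul_comm]
  have hcharpoly := charpoly_add_mul_mul_charpoly_of_mul_eq_mul hcol (replicateRow Unit w)
  simp only [← vecMulVec_eq, charpoly_of_unique (k := Unit)] at hcharpoly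
  simpa [mul_comm] using hcharpoly

theorem charpoly_rank_one_update_along_eigenvector
    {K : Type*} [Field K] {m : ℕ}
    (A : Matrix (Fin m) (Fin m) K) (v w : Fin m → K) (p : K)
    (h : A.mulVec v = p • v) :
    (X - C p) * (A + Matrix.vecMulVec v w).charpoly
      = (X - C (p + w ⬝ᵥ v)) * A.charpoly :=
  charpoly_rank_one_update_along_eigenvector_general A v w p h
end

section
/- Let A be an m×m complex matrix, let v, w ∈ ℂ^m, let p ∈ ℂ, and suppose A v = p·v. Then, as multisets of complex numbers counted with multiplicity, roots(charpoly(A + v wᵀ)) + {p} = roots(charpoly(A)) + {p + wᵀv}; i.e., the eigenvalues of A + v wᵀ are exactly the eigenvalues of A with one copy of p replaced by p + wᵀv. -/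
open Matrix Polynomial

/-!
Over a commutative ring, if `M u = c u` then
`[M, -u; wᵀ, 1] * [1, u; 0, c] = [M, 0; wᵀ, c + wᵀ u]`. Taking determinants, with the Schur
complement of the corner `1` on the left, gives `det (M + u wᵀ) * c = det M * (c + wᵀ u)` without
inverting `c` or `M`. Applied to the characteristic matrix `X - A`, which has eigenvector `v` with
eigenvalue `X - p`, and to the update by `v (-w)ᵀ`, this identity becomes one between
characteristic polynomials, whose roots can be compared.
-/

section CommRing

variable {n R : Type*} [Fintype n] [DecidableEq n] [CommRing R]

theorem det_add_vecMulVec_mul_of_mulVec_eq_smul {M : Matrix n n R} {u : n → R} {c : R}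
    (hu : M *ᵥ u = c • u) (w : n → R) :
    (M + vecMulVec u w).det * c = M.det * (c + w ⬝ᵥ u) := by
  let col := replicateCol Unit u
  let row := replicateRow Unit w
  let corner (a : R) : Matrix Unit Unit R := diagonal fun _ => a
  have product : fromBlocks M (-col) row 1 * fromBlocks 1 col 0 (corner c) =
      fromBlocks M 0 row (corner (c + w ⬝ᵥ u)) := by
    have upper_right : M * col + -col * corner c = 0 := by
      ext i j
      simp [col, corner, ← replicateCol_mulVec, hu, mul_comm]
    have lower_right : row * col + 1 * corner c = corner (c + w ⬝ᵥ u) := by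
      ext i j
      simp [col, row, corner, replicateRow_mul_replicateCol_apply, add_comm]
    rw [fromBlocks_multiply, upper_right, lower_right]
    simp
  have schur : (fromBlocks M (-col) row 1).det = (M + vecMulVec u w).det := by
    rw [det_fromBlocks_one₂₂, Matrix.neg_mul, sub_neg_eq_add, ← vecMulVec_eq]
  simpa [det_mul, schur, corner] using congrArg det product

theorem charmatrix_mulVec_of_mulVec_eq_smul {A : Matrix n n R} {v : n → R} {p : R}
    (hv : A *ᵥ v = p • v) :
    A.charmatrix *ᵥ (C ∘ v) = (X - C p) • (C ∘ v) := by
  have map_eigenvector : A.map C *ᵥ (C ∘ v) = C p • (C ∘ v) := by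
    ext1 i
    simpa [hv] using (RingHom.map_mulVec C A v i).symm
  rw [charmatrix, sub_mulVec, sub_smul]
  simp [map_eigenvector]

theorem charmatrix_add_vecMulVec (A : Matrix n n R) (v w : n → R) :
    (A + vecMulVec v w).charmatrix = A.charmatrix + vecMulVec (C ∘ v) (-(C ∘ w)) := by
  have map_outer : C.mapMatrix (vecMulVec v w) = vecMulVec (C ∘ v) (C ∘ w) := by
    ext1 i j
    simp [vecMulVec_apply]
  rw [charmatrix, charmatrix, map_add, map_outer, vecMulVec_neg, sub_add_eq_sub_sub, sub_eq_add_neg]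

theorem charpoly_add_vecMulVec_mul_X_sub_C {A : Matrix n n R} {v : n → R} {p : R}
    (hv : A *ᵥ v = p • v) (w : n → R) :
    (A + vecMulVec v w).charpoly * (X - C p) = A.charpoly * (X - C (p + w ⬝ᵥ v)) := by
  have shifted_eigenvalue : X - C p + -(C ∘ w) ⬝ᵥ (C ∘ v) = X - C (p + w ⬝ᵥ v) := by
    rw [neg_dotProduct, ← RingHom.map_dotProduct, C_add]
    ring
  rw [charpoly, charmatrix_add_vecMulVec, det_add_vecMulVec_mul_of_mulVec_eq_smul
    (charmatrix_mulVec_of_mulVec_eq_smul hv), shifted_eigenvalue, charpoly]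

theorem eigenvalues_rank_one_update_along_eigenvector_general [IsDomain R]
    {A : Matrix n n R} {v : n → R} {p : R} (hv : A *ᵥ v = p • v) (w : n → R) :
    (A + vecMulVec v w).charpoly.roots + {p} = A.charpoly.roots + {p + w ⬝ᵥ v} := by
  have roots_charpoly_mul (B : Matrix n n R) (a : R) :
      (B.charpoly * (X - C a)).roots = B.charpoly.roots + {a} := by
    rw [roots_mul ((charpoly_monic B).mul (monic_X_sub_C a)).ne_zero, roots_X_sub_C]
  rw [← roots_charpoly_mul, charpoly_add_vecMulVec_mul_X_sub_C hv, roots_charpoly_mul]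

end CommRing

theorem eigenvalues_rank_one_update_along_eigenvector
    {m : ℕ} (A : Matrix (Fin m) (Fin m) ℂ) (v w : Fin m → ℂ) (p : ℂ)
    (h : A.mulVec v = p • v) :
    (A + Matrix.vecMulVec v w).charpoly.roots + {p}
      = A.charpoly.roots + {p + w ⬝ᵥ v} :=
  eigenvalues_rank_one_update_along_eigenvector_general h w
end

section
/- Let σ, μ, α, β be positive real numbers. Define B = (1 + (2+σ)²βμ/((1+σ)α²))^{−1/2}, A = (2+σ)μB/α, D = σ√μ, and U : ℝ → ℝ by U(x) = (A/(B + cosh(Dx)))^{1/σ}. Then U is positive, twice differentiable, and satisfies the ground-state profile equation −μ·U(x) + U''(x) + α·U(x)^{σ+1} + β·U(x)^{2σ+1} = 0 for every x ∈ ℝ. -/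
open Real

/-!
For `q x = B + cosh (D x)` the identity `cosh² - sinh² = 1` makes `(q')²` and `q''` polynomials in
`q`, so `(q ^ r)''` is a combination of `q ^ r`, `q ^ (r - 1)` and `q ^ (r - 2)`. With `r = -1 / σ`
these powers are multiples of `U`, `U ^ (σ + 1)` and `U ^ (2 * σ + 1)`, because `U ^ σ = A / q`. The
profile equation therefore reduces to three relations between the constants: `D² = σ² μ`,
`α A = (2 + σ) μ B` and `β A² = (1 + σ) μ (1 - B²)`.
-/

section AddCosh

variable {B D r x : ℝ}

lemma add_cosh_pos (hB : -1 < B) (x : ℝ) : 0 < B + cosh x := by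
  linarith [one_le_cosh x]

lemma hasDerivAt_add_cosh_mul_rpow (h : B + cosh (D * x) ≠ 0) :
    HasDerivAt (fun y ↦ (B + cosh (D * y)) ^ r)
      (r * D * (sinh (D * x) * (B + cosh (D * x)) ^ (r - 1))) x := by
  have hq := ((hasDerivAt_const_mul D (x := x)).cosh.const_add B).rpow_const (p := r) (Or.inl h)
  exact hq.congr_deriv (by ring)

lemma hasDerivAt_sinh_mul_add_cosh_mul_rpow (h : B + cosh (D * x) ≠ 0) :
    HasDerivAt (fun y ↦ sinh (D * y) * (B + cosh (D * y)) ^ (r - 1))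
      (D * (r * (B + cosh (D * x)) ^ r - (2 * r - 1) * B * (B + cosh (D * x)) ^ (r - 1)
        + (r - 1) * (B ^ 2 - 1) * (B + cosh (D * x)) ^ (r - 2))) x := by
  refine ((hasDerivAt_const_mul D (x := x)).sinh.mul
    (hasDerivAt_add_cosh_mul_rpow h)).congr_deriv ?_
  have hsinh : sinh (D * x) ^ 2 = cosh (D * x) ^ 2 - 1 := sinh_sq (D * x)
  have hr : r - 2 = r - 1 - 1 := by ring
  simp only [hr, rpow_sub_one h]
  field_simp
  linear_combination (r - 1) * D * (B + cosh (D * x)) ^ r * hsinh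

end AddCosh

/-- The ground-state profile `U` with amplitude `A`, shift `B` and inverse width `D` as independent
parameters; the profile equation holds once they are tied to `μ`, `α` and `β`. -/
noncomputable def groundStateProfile (σ A B D x : ℝ) : ℝ :=
  (A / (B + cosh (D * x))) ^ (1 / σ)

section GroundStateProfile

variable {σ A B : ℝ}

lemma groundStateProfile_pos (hA : 0 < A) (hB : -1 < B) (σ D x : ℝ) :
    0 < groundStateProfile σ A B D x :=
  rpow_pos_of_pos (div_pos hA (add_cosh_pos hB _)) _

lemma groundStateProfile_eq_mul_rpow (hA : 0 ≤ A) (hB : -1 < B) (σ D x : ℝ) :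
    groundStateProfile σ A B D x = A ^ (1 / σ) * (B + cosh (D * x)) ^ (-(1 / σ)) := by
  have hq := (add_cosh_pos hB (D * x)).le
  rw [groundStateProfile, div_rpow hA hq, rpow_neg hq, div_eq_mul_inv]

lemma groundStateProfile_rpow (hσ : σ ≠ 0) (hA : 0 ≤ A) (hB : -1 < B) (D x : ℝ) :
    groundStateProfile σ A B D x ^ σ = A / (B + cosh (D * x)) := by
  rw [groundStateProfile, one_div, rpow_inv_rpow (div_nonneg hA (add_cosh_pos hB _).le) hσ]

lemma groundStateProfile_rpow_add_one (hσ : σ ≠ 0) (hA : 0 < A) (hB : -1 < B) (D x : ℝ) :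
    groundStateProfile σ A B D x ^ (σ + 1) =
      A / (B + cosh (D * x)) * groundStateProfile σ A B D x := by
  rw [rpow_add_one (groundStateProfile_pos hA hB σ D x).ne', groundStateProfile_rpow hσ hA.le hB]

lemma groundStateProfile_rpow_two_mul_add_one (hσ : σ ≠ 0) (hA : 0 < A) (hB : -1 < B)
    (D x : ℝ) :
    groundStateProfile σ A B D x ^ (2 * σ + 1) =
      (A / (B + cosh (D * x))) ^ 2 * groundStateProfile σ A B D x := by
  have hU := groundStateProfile_pos hA hB σ D x
  rw [rpow_add_one hU.ne', mul_comm 2 σ, rpow_mul hU.le, rpow_two,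
    groundStateProfile_rpow hσ hA.le hB]

lemma hasDerivAt_groundStateProfile (hA : 0 ≤ A) (hB : -1 < B) (σ D x : ℝ) :
    HasDerivAt (groundStateProfile σ A B D)
      (A ^ (1 / σ) * (-(1 / σ) * D *
        (sinh (D * x) * (B + cosh (D * x)) ^ (-(1 / σ) - 1)))) x := by
  rw [funext (groundStateProfile_eq_mul_rpow hA hB σ D)]
  exact (hasDerivAt_add_cosh_mul_rpow (add_cosh_pos hB _).ne').const_mul _

lemma hasDerivAt_deriv_groundStateProfile (hσ : σ ≠ 0) (hA : 0 < A) (hB : -1 < B) (D x : ℝ) :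
    HasDerivAt (deriv (groundStateProfile σ A B D))
      (D ^ 2 / σ ^ 2 * (groundStateProfile σ A B D x
        - (2 + σ) * B / A * groundStateProfile σ A B D x ^ (σ + 1)
        - (1 + σ) * (1 - B ^ 2) / A ^ 2 * groundStateProfile σ A B D x ^ (2 * σ + 1))) x := by
  have hq : B + cosh (D * x) ≠ 0 := (add_cosh_pos hB _).ne'
  rw [funext fun y ↦ (hasDerivAt_groundStateProfile hA.le hB σ D y).deriv]
  refine (((hasDerivAt_sinh_mul_add_cosh_mul_rpow hq).const_mul _).const_mul _).congr_deriv ?_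
  have hexp : -(1 / σ) - 2 = -(1 / σ) - 1 - 1 := by ring
  rw [groundStateProfile_rpow_add_one hσ hA hB, groundStateProfile_rpow_two_mul_add_one hσ hA hB,
    groundStateProfile_eq_mul_rpow hA.le hB, hexp, rpow_sub_one hq (-(1 / σ) - 1),
    rpow_sub_one hq]
  field_simp
  ring

theorem groundStateProfile_equation {μ α β D : ℝ} (hσ : σ ≠ 0) (hA : 0 < A) (hB : -1 < B)
    (hD : D ^ 2 = σ ^ 2 * μ) (hαA : α * A = (2 + σ) * μ * B)
    (hβA : β * A ^ 2 = (1 + σ) * μ * (1 - B ^ 2)) (x : ℝ) :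
    -μ * groundStateProfile σ A B D x + deriv (deriv (groundStateProfile σ A B D)) x
      + α * groundStateProfile σ A B D x ^ (σ + 1)
      + β * groundStateProfile σ A B D x ^ (2 * σ + 1) = 0 := by
  have hμ : D ^ 2 / σ ^ 2 = μ := by rw [hD, mul_div_cancel_left₀ _ (pow_ne_zero 2 hσ)]
  have hα : α = (2 + σ) * μ * B / A := eq_div_of_mul_eq hA.ne' hαA
  have hβ : β = (1 + σ) * μ * (1 - B ^ 2) / A ^ 2 := eq_div_of_mul_eq (pow_ne_zero 2 hA.ne') hβA
  rw [(hasDerivAt_deriv_groundStateProfile hσ hA hB D x).deriv, hμ, hα, hβ]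
  ring

end GroundStateProfile

lemma rpow_neg_half_sq {x : ℝ} (hx : 0 ≤ x) : (x ^ (-(1 / 2 : ℝ))) ^ 2 = x⁻¹ := by
  rw [rpow_neg hx, ← sqrt_eq_rpow, inv_pow, sq_sqrt hx]

lemma beta_mul_amplitude_sq {σ μ α β A B : ℝ} (hσ : 1 + σ ≠ 0) (hα : α ≠ 0)
    (hA : A = (2 + σ) * μ * B / α)
    (hB : B ^ 2 * (1 + (2 + σ) ^ 2 * β * μ / ((1 + σ) * α ^ 2)) = 1) :
    β * A ^ 2 = (1 + σ) * μ * (1 - B ^ 2) := by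
  have hB' : 1 - B ^ 2 = B ^ 2 * ((2 + σ) ^ 2 * β * μ / ((1 + σ) * α ^ 2)) := by
    linear_combination -hB
  rw [hA, hB']
  field_simp

theorem explicit_ground_state_profile_general
    (σ μ α β : ℝ) (hσ₀ : σ ≠ 0) (hσ₁ : 1 + σ ≠ 0) (hμ : 0 < μ) (hα : 0 < (2 + σ) / α)
    (hβ : 0 < 1 + (2 + σ) ^ 2 * β * μ / ((1 + σ) * α ^ 2))
    (B A D : ℝ) (U : ℝ → ℝ)
    (hB : B = (1 + (2 + σ) ^ 2 * β * μ / ((1 + σ) * α ^ 2)) ^ (-(1 / 2 : ℝ)))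
    (hA : A = (2 + σ) * μ * B / α)
    (hD : D = σ * √μ)
    (hU : ∀ x : ℝ, U x = (A / (B + cosh (D * x))) ^ (1 / σ)) :
    (∀ x : ℝ, 0 < U x) ∧
    Differentiable ℝ U ∧ Differentiable ℝ (deriv U) ∧
    (∀ x : ℝ, -μ * U x + deriv (deriv U) x
      + α * U x ^ (σ + 1) + β * U x ^ (2 * σ + 1) = 0) := by
  obtain rfl : U = groundStateProfile σ A B D := funext hU
  have hα₀ : α ≠ 0 := (div_ne_zero_iff.mp hα.ne').2
  have hBpos : 0 < B := hB ▸ rpow_pos_of_pos hβ _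
  have hB₁ : -1 < B := by linarith
  have hApos : 0 < A := by
    rw [hA, mul_assoc, mul_div_right_comm]
    positivity
  have hDsq : D ^ 2 = σ ^ 2 * μ := by rw [hD, mul_pow, sq_sqrt hμ.le]
  have hαA : α * A = (2 + σ) * μ * B := by rw [hA, mul_div_cancel₀ _ hα₀]
  have hβA : β * A ^ 2 = (1 + σ) * μ * (1 - B ^ 2) :=
    beta_mul_amplitude_sq hσ₁ hα₀ hA
      (by rw [hB, rpow_neg_half_sq hβ.le, inv_mul_cancel₀ hβ.ne'])
  exact ⟨groundStateProfile_pos hApos hB₁ σ D,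
    fun x ↦ (hasDerivAt_groundStateProfile hApos.le hB₁ σ D x).differentiableAt,
    fun x ↦ (hasDerivAt_deriv_groundStateProfile hσ₀ hApos hB₁ D x).differentiableAt,
    groundStateProfile_equation hσ₀ hApos hB₁ hDsq hαA hβA⟩

theorem explicit_ground_state_profile
    (σ μ α β : ℝ) (hσ : 0 < σ) (hμ : 0 < μ) (hα : 0 < α) (hβ : 0 < β)
    (B A D : ℝ) (U : ℝ → ℝ)
    (hB : B = (1 + (2 + σ) ^ 2 * β * μ / ((1 + σ) * α ^ 2)) ^ (-(1 / 2 : ℝ)))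
    (hA : A = (2 + σ) * μ * B / α)
    (hD : D = σ * Real.sqrt μ)
    (hU : ∀ x : ℝ, U x = (A / (B + Real.cosh (D * x))) ^ (1 / σ)) :
    (∀ x : ℝ, 0 < U x) ∧
    Differentiable ℝ U ∧ Differentiable ℝ (deriv U) ∧
    (∀ x : ℝ, -μ * U x + deriv (deriv U) x
      + α * U x ^ (σ + 1) + β * U x ^ (2 * σ + 1) = 0) :=
  explicit_ground_state_profile_general σ μ α β hσ.ne' (by positivity) hμ (by positivity)
    (by positivity) B A D U hB hA hD hU
end
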